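/- arXiv:nlin/0611008 — 2 statements merged into one kernel-verified Lean document; each statement's English description precedes it below -/
import Mathlib

section
/- For every nonnegative integer n, the operator T_1 = Σ_{i=1}^N z_i ∂_i² + 2a Σ_{i=1}^N (z_i − z_{i+1})^{-1}(z_i ∂_i − z_{i+1} ∂_{i+1}) − a Σ_{i=1}^N (z_i + z_{i+1})(z_i − z_{i+1})^{-2}(1 − K_{i,i+1}), acting on Σ-valued polynomials with K_{i,i+1} exchanging the variables z_i and z_{i+1} (and acting trivially on the spin component), leaves invariant the space 𝒯_1^n spanned by all elements of the form f(σ_1,σ_2,τ_N) Λ|s⟩ and g(σ_1,τ_N) Λ(z_1|s⟩), where |s⟩ ranges over Σ, f is a polynomial in σ_1, σ_2, τ_N of degree at most 1 in σ_2 and at most 1 in τ_N with total z-degree at most n, and g is a polynomial in σ_1, τ_N of degree at most 1 in τ_N with total z-degree at most n−1. In particular, for any element Φ of 𝒯_1^n, the a priori rational-function-valued expression T_1 Φ is a Σ-valued polynomial lying in 𝒯_1^n. -/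
noncomputable section

open MvPolynomial

/-- Polynomials in `N` variables over `ℂ`. -/
abbrev MvP (N : ℕ) : Type := MvPolynomial (Fin N) ℂ

/-- The spin space `Σ`: complex functions on `Fin N → Fin d`. -/
abbrev SpinV (N d : ℕ) : Type := (Fin N → Fin d) → ℂ

/-- `Σ`-valued polynomials. -/
abbrev SpinPoly (N d : ℕ) : Type := (Fin N → Fin d) → MvP N

/-- The canonical embedding of polynomials into the field of rational functions. -/
noncomputable def phi (N : ℕ) : MvP N →+* FractionRing (MvP N) :=
  algebraMap (MvP N) (FractionRing (MvP N))

/-- The power sum `σ_k = ∑ i, z_i ^ k`. -/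
def sig (N k : ℕ) : MvP N := ∑ i : Fin N, X i ^ k

/-- The top elementary symmetric polynomial `τ_N = ∏ i, z_i`. -/
def tauTop (N : ℕ) : MvP N := ∏ i : Fin N, X i

/-- The action of a permutation `π ∈ S_N` on the spin space, permuting the `N` spin slots. -/
def spinPerm {N d : ℕ} (π : Equiv.Perm (Fin N)) (v : SpinV N d) : SpinV N d :=
  fun c => v (c ∘ π)

/-- The spin vector `|s_i⟩ = (1/N!) ∑_{π ∈ S_N, π(1) = i} π |s⟩`. -/
noncomputable def sComp {N d : ℕ} [NeZero N] (s : SpinV N d) (i : Fin N) : SpinV N d :=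
  (N.factorial : ℂ)⁻¹ •
    ∑ π ∈ Finset.univ.filter (fun π : Equiv.Perm (Fin N) => π 0 = i), spinPerm π s

/-- The symmetrization `Λ|s⟩ = ∑ i, |s_i⟩`. -/
noncomputable def Lam {N d : ℕ} [NeZero N] (s : SpinV N d) : SpinV N d :=
  ∑ i : Fin N, sComp s i

/-- The operator
`T_1 = ∑ i z_i ∂_i² + 2a ∑ i (z_i - z_{i+1})⁻¹ (z_i ∂_i - z_{i+1} ∂_{i+1})
  - a ∑ i (z_i + z_{i+1}) (z_i - z_{i+1})⁻² (1 - K_{i,i+1})`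
(indices cyclic, `K_{i,i+1}` exchanging the variables `z_i` and `z_{i+1}`),
computed in the field of rational functions; it acts componentwise on `Σ`-valued
polynomials (`K_{i,i+1}` acting trivially on the spin component). -/
noncomputable def T1op (N : ℕ) [NeZero N] (a : ℝ) (f : MvP N) : FractionRing (MvP N) :=
  (∑ i : Fin N, phi N (X i * pderiv i (pderiv i f)))
  + phi N (C ((2 * a : ℝ) : ℂ)) *
      ∑ i : Fin N, (phi N (X i - X (i + 1)))⁻¹ *
        phi N (X i * pderiv i f - X (i + 1) * pderiv (i + 1) f)
  - phi N (C ((a : ℝ) : ℂ)) *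
      ∑ i : Fin N, phi N (X i + X (i + 1)) * ((phi N (X i - X (i + 1)))⁻¹) ^ 2 *
        phi N (f - rename (Equiv.swap i (i + 1)) f)

/-- Generators of type `f(σ_1, σ_2, τ_N) Λ|s⟩`, where `f` has degree at most `1` in `σ_2`
and in `τ_N`, and total `z`-degree at most `n`. -/
def T1genF (N d n : ℕ) [NeZero N] : Set (SpinPoly N d) :=
  {Φ | ∃ (s : SpinV N d) (F : MvPolynomial (Fin 3) ℂ),
    F.degreeOf 1 ≤ 1 ∧ F.degreeOf 2 ≤ 1 ∧
    (aeval ![sig N 1, sig N 2, tauTop N] F : MvP N).totalDegree ≤ n ∧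
    Φ = fun c => C (Lam s c) * aeval ![sig N 1, sig N 2, tauTop N] F}

/-- Generators of type `g(σ_1, τ_N) Λ(z_1 |s⟩)`, where `g` has degree at most `1` in `τ_N`
and total `z`-degree at most `n - 1`. -/
def T1genG (N d n : ℕ) [NeZero N] : Set (SpinPoly N d) :=
  {Φ | ∃ (s : SpinV N d) (G : MvPolynomial (Fin 2) ℂ),
    G.degreeOf 1 ≤ 1 ∧
    (aeval ![sig N 1, tauTop N] G : MvP N).totalDegree + 1 ≤ n ∧
    Φ = fun c => ∑ i : Fin N, C (sComp s i c) * (X i * aeval ![sig N 1, tauTop N] G)}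

/-- The space `𝒯_1^n`. -/
noncomputable def T1space (N d n : ℕ) [NeZero N] : Submodule ℂ (SpinPoly N d) :=
  Submodule.span ℂ (T1genF N d n ∪ T1genG N d n)

/-!
`T_1` is a second-order operator whose carré du champ against symmetric polynomials is
`Γ(f, g) = ∑ i, z_i ∂_i f ∂_i g`, so multiplication by a symmetric `f` changes `T_1` only through
`T_1 f` and `Γ(f, ·)`. Here `Γ(σ_1, ·)` is the Euler operator, a scalar on homogeneous polynomials,
and `Γ(τ_N, ·) = τ_N ∑ i, ∂_i`, while `T_1 τ_N = 0` and `T_1 σ_1` is a constant. Powers of `σ_1`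
and at most one factor `τ_N` can therefore be stripped off, which leaves `T_1` on `1`, on `σ_2`
(a multiple of `σ_1`) and on linear forms (a constant, their coefficient sum up to a factor; on the
components of `Λ(z_1|s⟩)` it turns the `|s_i⟩` into `Λ|s⟩`). `T_1` lowers degrees by one, so the
degree bounds are preserved.
-/

section Polynomials

variable {σ R : Type*} [CommSemiring R]

/-- `aeval x F` is a combination of the homogeneous products `x ^ m`. Those of degree above `n` may
occur with nonzero coefficients, but their contributions cancel. -/
theorem aeval_smul_mem_of_totalDegree_le {κ M : Type*} [AddCommMonoid M] [Module R M]
    [Module (MvPolynomial σ R) M] [IsScalarTower R (MvPolynomial σ R) M]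
    {x : κ → MvPolynomial σ R} {w : κ → ℕ} (hx : ∀ k, (x k).IsHomogeneous (w k))
    {F : MvPolynomial κ R} {n : ℕ} (hF : (aeval x F).totalDegree ≤ n) {W : Submodule R M} {Ψ : M}
    (hW : ∀ m ∈ F.support, Finsupp.weight w m ≤ n → (m.prod fun k e => x k ^ e) • Ψ ∈ W) :
    aeval x F • Ψ ∈ W := by
  have hprod (m : κ →₀ ℕ) :
      (m.prod fun k e => x k ^ e).IsHomogeneous (Finsupp.weight w m) := by
    rw [Finsupp.weight_apply]
    refine IsHomogeneous.prod _ _ _ fun k _ => ?_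
    simpa [mul_comm] using (hx k).pow (m k)
  have hsum : aeval x F = ∑ m ∈ F.support, F.coeff m • m.prod fun k e => x k ^ e := by
    simp only [aeval_def, eval₂_eq, Finsupp.prod, Algebra.smul_def]
  rw [← sum_homogeneousComponent (aeval x F), Finset.sum_smul]
  refine Submodule.sum_mem _ fun j hj => ?_
  rw [hsum, map_sum, Finset.sum_smul]
  refine Submodule.sum_mem _ fun m hm => ?_
  rw [map_smul, homogeneousComponent_of_mem (hprod m), smul_assoc]
  refine Submodule.smul_mem _ _ ?_
  split_ifs with hj'
  · exact hW m hm (by have := Finset.mem_range.1 hj; omega)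
  · simp

theorem psum_isHomogeneous [Fintype σ] (k : ℕ) : (psum σ R k).IsHomogeneous k :=
  IsHomogeneous.sum _ _ _ fun i _ => isHomogeneous_X_pow i k

theorem prod_X_isSymmetric [Fintype σ] : (∏ i : σ, X i : MvPolynomial σ R).IsSymmetric := by
  intro e
  simpa only [map_prod, rename_X] using Equiv.prod_comp e fun j => (X j : MvPolynomial σ R)

theorem prod_X_isHomogeneous [Fintype σ] :
    (∏ i : σ, X i : MvPolynomial σ R).IsHomogeneous (Fintype.card σ) := by
  simpa using IsHomogeneous.prod Finset.univ (X : σ → MvPolynomial σ R) (fun _ => 1)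
    fun i _ => isHomogeneous_X R i

theorem X_mul_pderiv_prod_X [Fintype σ] (i : σ) :
    X i * pderiv i (∏ j : σ, X j : MvPolynomial σ R) = ∏ j : σ, X j := by
  have hprod : (∏ j : σ, X j : MvPolynomial σ R) = monomial (∑ j : σ, Finsupp.single j 1) 1 := by
    simp [monomial_sum_one, X]
  rw [hprod, X_mul_pderiv_monomial]
  simp [Finsupp.finsetSum_apply]

/-- The linear form `∑ i, v i * z_i`. -/
def linForm [Fintype σ] (v : σ → R) : MvPolynomial σ R := ∑ i, C (v i) * X i

theorem pderiv_linForm [Fintype σ] (v : σ → R) (i : σ) : pderiv i (linForm v) = C (v i) := by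
  classical
  simp [linForm, pderiv_X, Pi.single_apply]

theorem linForm_isHomogeneous [Fintype σ] (v : σ → R) : (linForm v).IsHomogeneous 1 :=
  IsHomogeneous.sum _ _ _ fun i _ => isHomogeneous_C_mul_X (v i) i

theorem linForm_sub_rename_swap {S : Type*} [CommRing S] [Fintype σ] [DecidableEq σ] (v : σ → S)
    (i j : σ) :
    linForm v - rename (Equiv.swap i j) (linForm v) = C (v i - v j) * (X i - X j) := by
  rcases eq_or_ne i j with rfl | hij
  · simp [linForm]
  simp only [linForm, map_sum, map_mul, rename_C, rename_X, ← Finset.sum_sub_distrib]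
  rw [Finset.sum_eq_add i j hij]
  · simp only [Equiv.swap_apply_left, Equiv.swap_apply_right, C_sub]
    ring
  · intro k _ hk
    rw [Equiv.swap_apply_of_ne_of_ne hk.1 hk.2, sub_self]
  · simp
  · simp

/-- The carré du champ `Γ(f, g) = ∑ i, z_i ∂_i f ∂_i g` of the operator `∑ i, z_i ∂_i²`; it
measures the failure of the Leibniz rule for second-order operators with this principal part. -/
def carreDuChamp [Fintype σ] (f g : MvPolynomial σ R) : MvPolynomial σ R :=
  ∑ i, X i * (pderiv i f * pderiv i g)

theorem carreDuChamp_psum_one [Fintype σ] {f : MvPolynomial σ R} {k : ℕ}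
    (hf : f.IsHomogeneous k) : carreDuChamp (psum σ R 1) f = k • f := by
  classical
  have hpsum (i : σ) : pderiv i (psum σ R 1) = 1 := by simp [psum_one, pderiv_X, Pi.single_apply]
  simp only [carreDuChamp, hpsum, one_mul, hf.sum_X_mul_pderiv]

theorem carreDuChamp_prod_X [Fintype σ] (f : MvPolynomial σ R) :
    carreDuChamp (∏ i, X i) f = (∏ i, X i) * ∑ i, pderiv i f := by
  simp only [carreDuChamp, ← mul_assoc, X_mul_pderiv_prod_X, Finset.mul_sum]

end Polynomials

section Operator

variable {N : ℕ}

theorem phi_injective : Function.Injective (phi N) :=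
  IsFractionRing.injective (MvP N) (FractionRing (MvP N))

theorem sig_isSymmetric (k : ℕ) : (sig N k).IsSymmetric := psum_isSymmetric _ _ k

theorem sig_isHomogeneous (k : ℕ) : (sig N k).IsHomogeneous k := psum_isHomogeneous k

theorem sum_X_eq_sig_one : ∑ i : Fin N, (X i : MvP N) = sig N 1 := by simp [sig]

theorem pderiv_sig_two (i : Fin N) : pderiv i (sig N 2) = 2 * X i := by
  simp [sig, pderiv_X, Pi.single_apply]

theorem tauTop_isSymmetric : (tauTop N).IsSymmetric := prod_X_isSymmetric

theorem tauTop_isHomogeneous : (tauTop N).IsHomogeneous N := by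
  simpa [tauTop] using prod_X_isHomogeneous (σ := Fin N) (R := ℂ)

/-- The monomial `σ_1 ^ p * σ_2 ^ q * τ_N ^ r` in the symmetric polynomials from which `𝒯_1^n` is
built. -/
def symMonomial (N p q r : ℕ) : MvP N := sig N 1 ^ p * (tauTop N ^ r * sig N 2 ^ q)

theorem symMonomial_isHomogeneous (p q r : ℕ) :
    (symMonomial N p q r).IsHomogeneous (p + 2 * q + N * r) := by
  have h := ((sig_isHomogeneous (N := N) 1).pow p).mul
    ((tauTop_isHomogeneous.pow r).mul ((sig_isHomogeneous 2).pow q))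
  rwa [one_mul, add_comm (N * r), ← add_assoc] at h

variable [NeZero N] {a : ℝ}

theorem X_sub_X_add_one_ne_zero (hN : 2 ≤ N) (i : Fin N) : (X i - X (i + 1) : MvP N) ≠ 0 := by
  have hi : i ≠ i + 1 := by simpa using (by omega : N ≠ 1)
  exact sub_ne_zero.2 fun h => hi (X_injective h)

theorem sum_add_one {M : Type*} [AddCommMonoid M] (f : Fin N → M) :
    ∑ i, f (i + 1) = ∑ i, f i :=
  Equiv.sum_comp (Equiv.addRight 1) f

theorem T1op_add (f g : MvP N) : T1op N a (f + g) = T1op N a f + T1op N a g := by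
  simp only [T1op, map_add, map_sub, mul_add, mul_sub, Finset.sum_add_distrib,
    Finset.sum_sub_distrib]
  ring

/-- The exchange terms are linear over symmetric polynomials and the first-order terms are
derivations, so only `∑ i, z_i ∂_i²` produces a cross term. -/
theorem T1op_mul {f : MvP N} (hf : f.IsSymmetric) (g : MvP N) :
    T1op N a (f * g) =
      phi N f * T1op N a g + T1op N a f * phi N g + 2 * phi N (carreDuChamp f g) := by
  simp only [T1op, carreDuChamp, map_sum, Finset.mul_sum, Finset.sum_mul,
    ← Finset.sum_add_distrib, ← Finset.sum_sub_distrib, mul_add, add_mul, mul_sub, sub_mul]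
  refine Finset.sum_congr rfl fun i _ => ?_
  simp only [pderiv_mul, map_add, map_sub, map_mul, hf (Equiv.swap i (i + 1))]
  ring

theorem T1op_C (z : ℂ) : T1op N a (C z) = 0 := by
  simp [T1op]

theorem T1op_C_mul (z : ℂ) (f : MvP N) : T1op N a (C z * f) = phi N (C z) * T1op N a f := by
  rw [T1op_mul (IsSymmetric.C z), T1op_C]
  simp [carreDuChamp]

theorem T1op_smul (z : ℂ) (f : MvP N) : T1op N a (z • f) = z • T1op N a f := by
  rw [smul_eq_C_mul, T1op_C_mul, Algebra.smul_def, IsScalarTower.algebraMap_apply ℂ (MvP N),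
    algebraMap_eq, phi]

/-- `Q i` is what remains of the terms of `T_1` for the pair `(i, i + 1)` when their poles
cancel. -/
theorem T1op_eq_phi (hN : 2 ≤ N) {f : MvP N} {Q : Fin N → MvP N}
    (hQ : ∀ i, 2 * (X i - X (i + 1)) * (X i * pderiv i f - X (i + 1) * pderiv (i + 1) f)
      - (X i + X (i + 1)) * (f - rename (Equiv.swap i (i + 1)) f)
      = (X i - X (i + 1)) ^ 2 * Q i) :
    T1op N a f = phi N ((∑ i, X i * pderiv i (pderiv i f)) + (a : ℂ) • ∑ i, Q i) := by
  have hpair (i : Fin N) :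
      2 * ((phi N (X i - X (i + 1)))⁻¹ *
          phi N (X i * pderiv i f - X (i + 1) * pderiv (i + 1) f))
        - phi N (X i + X (i + 1)) * ((phi N (X i - X (i + 1)))⁻¹) ^ 2 *
          phi N (f - rename (Equiv.swap i (i + 1)) f) = phi N (Q i) := by
    have hne : phi N (X i - X (i + 1)) ≠ 0 :=
      (map_ne_zero_iff _ phi_injective).2 (X_sub_X_add_one_ne_zero hN i)
    have h := congrArg (phi N) (hQ i)
    simp only [map_sub (phi N) (_ * _ * _), map_mul (phi N) (_ * _), map_mul (phi N) 2,
      map_mul (phi N) (_ + _), map_mul (phi N) (_ ^ _), map_pow, map_ofNat] at h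
    field_simp
    linear_combination h
  have htwo : phi N (C ((2 * a : ℝ) : ℂ)) = phi N (C (a : ℂ)) * 2 := by
    push_cast
    rw [C_mul, map_mul, map_ofNat C, map_ofNat (phi N), mul_comm]
  rw [T1op, add_sub_assoc, map_add, map_sum, smul_eq_C_mul, map_mul, map_sum, htwo, mul_assoc,
    ← mul_sub, Finset.mul_sum, ← Finset.sum_sub_distrib, Finset.sum_congr rfl fun i _ => hpair i]

theorem T1op_linForm (hN : 2 ≤ N) (v : Fin N → ℂ) :
    T1op N a (linForm v) = phi N (C (2 * a * ∑ i, v i)) := by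
  rw [T1op_eq_phi hN (Q := fun i => C (v i + v (i + 1)))]
  · simp only [pderiv_linForm, pderiv_C, mul_zero, Finset.sum_const_zero, zero_add, ← map_sum,
      Finset.sum_add_distrib, sum_add_one v, smul_eq_C_mul, ← C_mul]
    congr 2
    ring
  · intro i
    rw [linForm_sub_rename_swap, pderiv_linForm, pderiv_linForm, C_add, C_sub]
    ring

theorem T1op_sig_one (hN : 2 ≤ N) : T1op N a (sig N 1) = phi N (C (2 * a * N)) := by
  have h : sig N 1 = linForm fun _ => 1 := by simp [sig, linForm]
  simp [h, T1op_linForm hN]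

theorem T1op_sig_two (hN : 2 ≤ N) :
    T1op N a (sig N 2) = phi N ((2 + 8 * a : ℂ) • sig N 1) := by
  rw [T1op_eq_phi hN (Q := fun i => 4 * (X i + X (i + 1)))]
  · congr 1
    have hlap (i : Fin N) : X i * pderiv i (pderiv i (sig N 2)) = 2 * X i := by
      rw [pderiv_sig_two, ← map_ofNat C 2, pderiv_C_mul, pderiv_X_self, mul_one, mul_comm]
    simp only [hlap, ← Finset.mul_sum, Finset.sum_add_distrib, sum_add_one X, sum_X_eq_sig_one,
      smul_eq_C_mul, C_add, C_mul, map_ofNat]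
    ring
  · intro i
    rw [sig_isSymmetric, pderiv_sig_two, pderiv_sig_two]
    ring

theorem T1op_tauTop : T1op N a (tauTop N) = 0 := by
  have hX (i : Fin N) : X i * pderiv i (tauTop N) = tauTop N := X_mul_pderiv_prod_X i
  have hX2 (i : Fin N) : X i * pderiv i (pderiv i (tauTop N)) = 0 := by
    simpa [pderiv_mul] using congrArg (pderiv i) (hX i)
  have hswap (i : Fin N) : rename (Equiv.swap i (i + 1)) (tauTop N) = tauTop N :=
    tauTop_isSymmetric _
  simp [T1op, hX, hX2, hswap]

theorem T1op_tauTop_pow_mul {r : ℕ} (hr : r ≤ 1) (f : MvP N) :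
    T1op N a (tauTop N ^ r * f) =
      phi N (tauTop N ^ r) * (T1op N a f + phi N ((2 * r : ℂ) • ∑ i, pderiv i f)) := by
  interval_cases r
  · simp
  · rw [pow_one, T1op_mul tauTop_isSymmetric, T1op_tauTop, tauTop,
      carreDuChamp_prod_X]
    simp only [smul_eq_C_mul, map_mul, Nat.cast_one, mul_one, map_ofNat]
    ring

/-- Where `p - 1` is truncated in the exponent, its coefficient `p` vanishes. -/
theorem T1op_sig_one_pow_mul (hN : 2 ≤ N) {f : MvP N} {k : ℕ} (hf : f.IsHomogeneous k) (p : ℕ) :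
    T1op N a (sig N 1 ^ p * f) = phi N (sig N 1 ^ p) * T1op N a f +
      phi N ((p * (p - 1 + 2 * k + 2 * a * N) : ℂ) • (sig N 1 ^ (p - 1) * f)) := by
  induction p with
  | zero => simp
  | succ p ih =>
    have hhom : (sig N 1 ^ p * f).IsHomogeneous (p + k) := by
      simpa only [one_mul] using ((sig_isHomogeneous 1).pow p).mul hf
    have hEuler : carreDuChamp (sig N 1) (sig N 1 ^ p * f) = (p + k) • (sig N 1 ^ p * f) :=
      carreDuChamp_psum_one hhom
    have hpow : (p : MvP N) * sig N 1 ^ p = p * (sig N 1 * sig N 1 ^ (p - 1)) := by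
      rcases p with _ | p
      · simp
      · rw [Nat.add_sub_cancel, pow_succ']
    have hpow' := congrArg (phi N) hpow
    rw [pow_succ', mul_assoc, T1op_mul (sig_isSymmetric 1), ih, T1op_sig_one hN, hEuler]
    simp only [smul_eq_C_mul, nsmul_eq_mul, Nat.cast_succ, Nat.cast_add, Nat.add_sub_cancel,
      map_mul, map_add, map_sub, map_pow, map_natCast, map_ofNat, map_one] at hpow' ⊢
    linear_combination -(p - 1 + 2 * k + 2 * phi N (C (a : ℂ)) * N) * phi N f * hpow'

theorem T1op_sig_one_pow_mul_tauTop_pow_mul (hN : 2 ≤ N) {f g : MvP N} {k : ℕ}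
    (hf : f.IsHomogeneous k) (hT : T1op N a f = phi N g) (p : ℕ) {r : ℕ} (hr : r ≤ 1) :
    T1op N a (sig N 1 ^ p * (tauTop N ^ r * f)) =
      phi N ((p * (p - 1 + 2 * (N * r + k : ℕ) + 2 * a * N) : ℂ) •
          (sig N 1 ^ (p - 1) * (tauTop N ^ r * f))
        + sig N 1 ^ p * (tauTop N ^ r * (g + (2 * r : ℂ) • ∑ i, pderiv i f))) := by
  have hhom : (tauTop N ^ r * f).IsHomogeneous (N * r + k) := (tauTop_isHomogeneous.pow r).mul hf
  rw [T1op_sig_one_pow_mul hN hhom, T1op_tauTop_pow_mul hr, hT]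
  simp only [map_add, map_mul]
  ring

theorem T1op_symMonomial (hN : 2 ≤ N) (p : ℕ) {q r : ℕ} (hq : q ≤ 1) (hr : r ≤ 1) :
    T1op N a (symMonomial N p q r) =
      phi N ((p * (p - 1 + 2 * (N * r + 2 * q : ℕ) + 2 * a * N) : ℂ) •
          symMonomial N (p - 1) q r
        + (q * (2 + 8 * a + 4 * r) : ℂ) • symMonomial N (p + 1) 0 r) := by
  have hT : T1op N a (sig N 2 ^ q) = phi N ((q * (2 + 8 * a) : ℂ) • sig N 1) := by
    interval_cases q
    · simpa using T1op_C (1 : ℂ)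
    · simpa using T1op_sig_two hN
  have hgrad : ∑ i, pderiv i (sig N 2 ^ q) = (2 * q : ℂ) • sig N 1 := by
    interval_cases q
    · simp
    · simp only [pow_one, pderiv_sig_two, ← Finset.mul_sum, sum_X_eq_sig_one, smul_eq_C_mul,
        Nat.cast_one, mul_one, map_ofNat]
  rw [symMonomial, T1op_sig_one_pow_mul_tauTop_pow_mul hN ((sig_isHomogeneous 2).pow q) hT p hr,
    hgrad]
  simp only [symMonomial, smul_eq_C_mul, C_mul, C_add, map_ofNat]
  congr 1
  ring

theorem T1op_symMonomial_mul_linForm (hN : 2 ≤ N) (p : ℕ) {r : ℕ} (hr : r ≤ 1)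
    (v : Fin N → ℂ) :
    T1op N a (symMonomial N p 0 r * linForm v) =
      phi N ((p * (p - 1 + 2 * (N * r + 1 : ℕ) + 2 * a * N) : ℂ) •
          (symMonomial N (p - 1) 0 r * linForm v)
        + (2 * a + 2 * r : ℂ) • (symMonomial N p 0 r * C (∑ i, v i))) := by
  have hassoc (p : ℕ) : symMonomial N p 0 r * linForm v =
      sig N 1 ^ p * (tauTop N ^ r * linForm v) := by
    simp [symMonomial, mul_assoc]
  have hgrad : ∑ i, pderiv i (linForm v) = C (∑ i, v i) := by
    simp [pderiv_linForm]
  rw [hassoc, hassoc, T1op_sig_one_pow_mul_tauTop_pow_mul hN (linForm_isHomogeneous v)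
    (T1op_linForm hN v) p hr, hgrad]
  simp only [symMonomial, smul_eq_C_mul, C_mul, C_add, map_ofNat]
  congr 1
  ring

end Operator

section SpinSpace

variable {N d n : ℕ}

/-- A spin vector, regarded as a constant `Σ`-valued polynomial. -/
def constSpin (v : SpinV N d) : SpinPoly N d := fun c => C (v c)

theorem smul_constSpin (f : MvP N) (v : SpinV N d) :
    f • constSpin v = fun c => C (v c) * f :=
  _root_.funext fun _ => mul_comm _ _

/-- The inclusion of `Σ`-valued polynomials into `Σ`-valued rational functions. -/
def phiSpin (N d : ℕ) : SpinPoly N d →ₗ[ℂ] (Fin N → Fin d) → FractionRing (MvP N) :=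
  ((Algebra.linearMap (MvP N) (FractionRing (MvP N))).restrictScalars ℂ).compLeft _

theorem phiSpin_apply (Φ : SpinPoly N d) (c : Fin N → Fin d) : phiSpin N d Φ c = phi N (Φ c) := rfl

variable [NeZero N] {a : ℝ}

/-- The `Σ`-valued polynomial `Λ(z_1|s⟩) = ∑ i, z_i |s_i⟩`. -/
def linSpin (s : SpinV N d) : SpinPoly N d := fun c => linForm fun i => sComp s i c

theorem symMonomial_smul_constSpin_mem_T1space (s : SpinV N d) {p q r : ℕ} (hq : q ≤ 1)
    (hr : r ≤ 1) (hn : p + 2 * q + N * r ≤ n) :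
    symMonomial N p q r • constSpin (Lam s) ∈ T1space N d n := by
  let m : Fin 3 →₀ ℕ := Finsupp.equivFunOnFinite.symm ![p, q, r]
  have hm : aeval ![sig N 1, sig N 2, tauTop N] (monomial m (1 : ℂ)) = symMonomial N p q r := by
    rw [aeval_monomial, Finsupp.prod_fintype _ _ (by simp), Fin.prod_univ_three]
    simp [m, symMonomial, mul_assoc, mul_comm (tauTop N ^ r)]
  refine Submodule.subset_span (Or.inl ⟨s, monomial m 1, ?_, ?_, ?_, ?_⟩)
  · simpa [degreeOf_monomial_eq, m] using hq
  · simpa [degreeOf_monomial_eq, m] using hr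
  · rw [hm]
    exact (symMonomial_isHomogeneous p q r).totalDegree_le.trans hn
  · rw [hm]
    exact smul_constSpin _ _

theorem smul_linSpin (f : MvP N) (s : SpinV N d) :
    f • linSpin s = fun c => ∑ i, C (sComp s i c) * (X i * f) := by
  funext c
  simp only [linSpin, linForm, Pi.smul_apply, smul_eq_mul, Finset.mul_sum]
  exact Finset.sum_congr rfl fun i _ => by ring

theorem symMonomial_smul_linSpin_mem_T1space (s : SpinV N d) {p r : ℕ} (hr : r ≤ 1)
    (hn : p + N * r + 1 ≤ n) : symMonomial N p 0 r • linSpin s ∈ T1space N d n := by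
  let m : Fin 2 →₀ ℕ := Finsupp.equivFunOnFinite.symm ![p, r]
  have hm : aeval ![sig N 1, tauTop N] (monomial m (1 : ℂ)) = symMonomial N p 0 r := by
    rw [aeval_monomial, Finsupp.prod_fintype _ _ (by simp), Fin.prod_univ_two]
    simp [m, symMonomial]
  refine Submodule.subset_span (Or.inr ⟨s, monomial m 1, ?_, ?_, ?_⟩)
  · simpa [degreeOf_monomial_eq, m] using hr
  · rw [hm]
    have := (symMonomial_isHomogeneous (N := N) p 0 r).totalDegree_le
    omega
  · rw [hm, smul_linSpin]

theorem T1space_le {W : Submodule ℂ (SpinPoly N d)}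
    (hF : ∀ s p q r, q ≤ 1 → r ≤ 1 → p + 2 * q + N * r ≤ n →
      symMonomial N p q r • constSpin (Lam s) ∈ W)
    (hG : ∀ s p r, r ≤ 1 → p + N * r + 1 ≤ n → symMonomial N p 0 r • linSpin s ∈ W) :
    T1space N d n ≤ W := by
  refine Submodule.span_le.2 ?_
  rintro Φ (⟨s, F, hF1, hF2, hFn, rfl⟩ | ⟨s, G, hG1, hGn, rfl⟩)
  · have hx : ∀ k, (![sig N 1, sig N 2, tauTop N] k).IsHomogeneous (![1, 2, N] k) := by
      simp [Fin.forall_fin_succ, sig_isHomogeneous, tauTop_isHomogeneous]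
    have hmem : aeval ![sig N 1, sig N 2, tauTop N] F • constSpin (Lam s) ∈ W := by
      refine aeval_smul_mem_of_totalDegree_le hx hFn fun m hm hmn => ?_
      have hdeg : m 0 + 2 * m 1 + N * m 2 ≤ n := by
        simpa [Finsupp.weight_eq_sum, Fin.sum_univ_three, mul_comm] using hmn
      have h := hF s (m 0) (m 1) (m 2) ((monomial_le_degreeOf 1 hm).trans hF1)
        ((monomial_le_degreeOf 2 hm).trans hF2) hdeg
      rw [Finsupp.prod_fintype _ _ (by simp), Fin.prod_univ_three]
      simpa [symMonomial, mul_comm, mul_left_comm] using h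
    rwa [smul_constSpin] at hmem
  · have hx : ∀ k, (![sig N 1, tauTop N] k).IsHomogeneous (![1, N] k) := by
      simp [Fin.forall_fin_succ, sig_isHomogeneous, tauTop_isHomogeneous]
    have hmem : aeval ![sig N 1, tauTop N] G • linSpin s ∈ W := by
      refine aeval_smul_mem_of_totalDegree_le hx (Nat.le_sub_of_add_le hGn) fun m hm hmn => ?_
      have hdeg : m 0 + N * m 1 ≤ n - 1 := by
        simpa [Finsupp.weight_eq_sum, mul_comm] using hmn
      have h := hG s (m 0) (m 1) ((monomial_le_degreeOf 1 hm).trans hG1) (by omega)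
      rw [Finsupp.prod_fintype _ _ (by simp), Fin.prod_univ_two]
      simpa [symMonomial] using h
    rwa [smul_linSpin] at hmem

/-- `T_1`, applied to each spin component. -/
def T1Spin (N d : ℕ) [NeZero N] (a : ℝ) :
    SpinPoly N d →ₗ[ℂ] (Fin N → Fin d) → FractionRing (MvP N) :=
  LinearMap.compLeft { toFun := T1op N a, map_add' := T1op_add, map_smul' := T1op_smul } _

theorem T1Spin_apply (Φ : SpinPoly N d) (c : Fin N → Fin d) :
    T1Spin N d a Φ c = T1op N a (Φ c) := rfl

theorem T1Spin_symMonomial_smul_constSpin (hN : 2 ≤ N) (v : SpinV N d) (p : ℕ) {q r : ℕ}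
    (hq : q ≤ 1) (hr : r ≤ 1) :
    T1Spin N d a (symMonomial N p q r • constSpin v) =
      phiSpin N d ((p * (p - 1 + 2 * (N * r + 2 * q : ℕ) + 2 * a * N) : ℂ) •
          symMonomial N (p - 1) q r • constSpin v
        + (q * (2 + 8 * a + 4 * r) : ℂ) • symMonomial N (p + 1) 0 r • constSpin v) := by
  funext c
  rw [T1Spin_apply, phiSpin_apply]
  simp only [constSpin, Pi.add_apply, Pi.smul_apply, smul_eq_mul]
  rw [mul_comm, T1op_C_mul, T1op_symMonomial hN p hq hr, ← map_mul]
  congr 1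
  simp only [smul_eq_C_mul]
  ring

theorem T1Spin_symMonomial_smul_linSpin (hN : 2 ≤ N) (s : SpinV N d) (p : ℕ) {r : ℕ}
    (hr : r ≤ 1) :
    T1Spin N d a (symMonomial N p 0 r • linSpin s) =
      phiSpin N d ((p * (p - 1 + 2 * (N * r + 1 : ℕ) + 2 * a * N) : ℂ) •
          symMonomial N (p - 1) 0 r • linSpin s
        + (2 * a + 2 * r : ℂ) • symMonomial N p 0 r • constSpin (Lam s)) := by
  funext c
  have hLam : Lam s c = ∑ i, sComp s i c := Finset.sum_apply c _ _
  change T1op N a (symMonomial N p 0 r * linForm fun i => sComp s i c) = phi N _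
  rw [T1op_symMonomial_mul_linForm hN p hr, ← hLam]
  rfl

theorem T1space_le_comap_T1Spin (hN : 2 ≤ N) :
    T1space N d n ≤ ((T1space N d n).map (phiSpin N d)).comap (T1Spin N d a) := by
  refine T1space_le (fun s p q r hq hr hn => ?_) (fun s p r hr hn => ?_)
  · refine ⟨_, add_mem (Submodule.smul_mem _ _ ?_) ?_,
      (T1Spin_symMonomial_smul_constSpin hN (Lam s) p hq hr).symm⟩
    · exact symMonomial_smul_constSpin_mem_T1space s hq hr (by omega)
    · interval_cases q
      · simp
      · exact Submodule.smul_mem _ _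
          (symMonomial_smul_constSpin_mem_T1space s zero_le_one hr (by omega))
  · refine ⟨_, add_mem (Submodule.smul_mem _ _ ?_) (Submodule.smul_mem _ _ ?_),
      (T1Spin_symMonomial_smul_linSpin hN s p hr).symm⟩
    · exact symMonomial_smul_linSpin_mem_T1space s hr (by omega)
    · exact symMonomial_smul_constSpin_mem_T1space s zero_le_one hr (by omega)

end SpinSpace

theorem stmt_6 (N d : ℕ) [NeZero N] (hN : 3 ≤ N) (hd : 1 ≤ d) (a : ℝ) (n : ℕ)
    (Φ : SpinPoly N d) (hΦ : Φ ∈ T1space N d n) :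
    ∃ Φ' ∈ T1space N d n, ∀ c : Fin N → Fin d, phi N (Φ' c) = T1op N a (Φ c) := by
  have hN2 : 2 ≤ N := by omega
  obtain ⟨Φ', hΦ', hT⟩ := T1space_le_comap_T1Spin (a := a) hN2 hΦ
  exact ⟨Φ', hΦ', congrFun hT⟩
end
end

section
/- For every nonnegative integer n, the gauge Hamiltonian \bar H_1 = −4 T_1 − 2(2b+1) J^- + 4ω J^0 + Nω(4a+2b+1), where T_1 = Σ_{i=1}^N z_i ∂_i² + 2a Σ_{i=1}^N (z_i − z_{i+1})^{-1}(z_i ∂_i − z_{i+1} ∂_{i+1}) − a Σ_{i=1}^N (z_i + z_{i+1})(z_i − z_{i+1})^{-2}(1 − K_{i,i+1}), J^- = Σ_i ∂_i and J^0 = Σ_i z_i ∂_i, leaves invariant the space \bar𝓗_1^n spanned by all elements of the form f(σ_1,σ_2) Λ|s⟩ and g(σ_1) Λ(z_1|s⟩), where |s⟩ ranges over Σ, f is a polynomial in σ_1 and σ_2 of degree at most 1 in σ_2 with total z-degree at most n, and g is a polynomial in σ_1 of degree at most n−1. (K_{i,i+1} exchanges the variables z_i and z_{i+1}, acting trivially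 on the spin component; the assertion includes the claim that \bar H_1 applied to such an element, computed in the field of rational functions, is again a Σ-valued polynomial in \bar𝓗_1^n.) -/
noncomputable section

open MvPolynomial

/-- The gauge Hamiltonian `H̄_1 = -4 T_1 - 2(2b+1) J⁻ + 4ω J⁰ + Nω(4a+2b+1)`, acting
componentwise on `Σ`-valued polynomials and computed in the field of rational functions. -/
noncomputable def Hbar1op (N : ℕ) [NeZero N] (a b ω : ℝ) (f : MvP N) :
    FractionRing (MvP N) :=
  -(phi N (C ((4 : ℝ) : ℂ)) * T1op N a f)
  - phi N (C ((2 * (2 * b + 1) : ℝ) : ℂ)) * ∑ i : Fin N, phi N (pderiv i f)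
  + phi N (C ((4 * ω : ℝ) : ℂ)) * ∑ i : Fin N, phi N (X i * pderiv i f)
  + phi N (C ((N * ω * (4 * a + 2 * b + 1) : ℝ) : ℂ)) * phi N f

/-- Generators of type `f(σ_1, σ_2) Λ|s⟩`, where `f` has degree at most `1` in `σ_2`
and total `z`-degree at most `n`. -/
def H1genF (N d n : ℕ) [NeZero N] : Set (SpinPoly N d) :=
  {Φ | ∃ (s : SpinV N d) (F : MvPolynomial (Fin 2) ℂ),
    F.degreeOf 1 ≤ 1 ∧
    (aeval ![sig N 1, sig N 2] F : MvP N).totalDegree ≤ n ∧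
    Φ = fun c => C (Lam s c) * aeval ![sig N 1, sig N 2] F}

/-- Generators of type `g(σ_1) Λ(z_1 |s⟩)`, where `g` has degree at most `n - 1`. -/
def H1genG (N d n : ℕ) [NeZero N] : Set (SpinPoly N d) :=
  {Φ | ∃ (s : SpinV N d) (G : Polynomial ℂ),
    (Polynomial.aeval (sig N 1) G : MvP N).totalDegree + 1 ≤ n ∧
    Φ = fun c => ∑ i : Fin N, C (sComp s i c) * (X i * Polynomial.aeval (sig N 1) G)}

/-- The space `H̄𝓗_1^n`. -/
noncomputable def H1space (N d n : ℕ) [NeZero N] : Submodule ℂ (SpinPoly N d) :=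
  Submodule.span ℂ (H1genF N d n ∪ H1genG N d n)

/-!
Let `H = -4T₁ - βJ⁻ + γJ⁰ + δ`, with `α` for the parameter `a` of `T₁`. On symmetric
polynomials `g`, `H` is regular and does not raise the degree, because the exchange term
vanishes and `zᵢ∂ᵢg - zⱼ∂ⱼg` is antisymmetric in `zᵢ, zⱼ`, hence divisible by `zᵢ - zⱼ`.
It preserves the form `p(σ₁) + q(σ₁)σ₂`, and it maps `p(σ₁)` to a polynomial in `σ₁` alone.
Finally, on symmetric `g` the commutator with multiplication by `zᵢ` is elementary,
`[H, zᵢ] = γ zᵢ - 8 zᵢ∂ᵢ - (8α + β)`: the poles of the two interaction terms cancel, and the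
constant turns `Λ(z₁|s⟩)` into `Λ|s⟩`.
-/

section Degree

variable {σ R : Type*}

theorem totalDegree_pderiv_le [CommSemiring R] (i : σ) (f : MvPolynomial σ R) :
    (pderiv i f).totalDegree ≤ f.totalDegree - 1 := by
  refine Finset.sup_le fun m hm ↦ Nat.le_sub_of_add_le ?_
  have hm' : m + Finsupp.single i 1 ∈ f.support := by
    rw [mem_support_iff, coeff_pderiv] at hm
    exact mem_support_iff.mpr (left_ne_zero_of_mul hm)
  simpa [Finsupp.sum_add_index'] using le_totalDegree hm'

theorem totalDegree_X_mul_pderiv_le [CommSemiring R] (i j : σ) (f : MvPolynomial σ R) :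
    (X i * pderiv j f).totalDegree ≤ f.totalDegree := by
  rcases subsingleton_or_nontrivial R with _ | _
  · rw [Subsingleton.elim (X i * pderiv j f) f]
  rcases Nat.eq_zero_or_pos f.totalDegree with hf | hf
  · rw [totalDegree_eq_zero_iff_eq_C.mp hf, pderiv_C, mul_zero, totalDegree_zero]
    exact Nat.zero_le _
  · have := totalDegree_mul (X i) (pderiv j f)
    have := totalDegree_pderiv_le j f
    rw [totalDegree_X] at *
    omega

end Degree

section Swap

variable {σ R : Type*} [CommRing R]

theorem X_sub_X_ne_zero [Nontrivial R] {i j : σ} (hij : i ≠ j) :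
    (X i - X j : MvPolynomial σ R) ≠ 0 :=
  sub_ne_zero.mpr fun h ↦ hij (X_injective h)

theorem X_sub_X_dvd_sub_rename_swap [DecidableEq σ] (i j : σ) (f : MvPolynomial σ R) :
    X i - X j ∣ f - rename (Equiv.swap i j) f := by
  let π := Ideal.Quotient.mkₐ R (Ideal.span {(X i - X j : MvPolynomial σ R)})
  have hX : π (X i) = π (X j) :=
    Ideal.Quotient.eq.mpr (Ideal.mem_span_singleton_self _)
  have hπ : π.comp (rename (Equiv.swap i j)) = π := by
    refine algHom_ext fun k ↦ ?_
    rw [AlgHom.comp_apply, rename_X, Equiv.swap_apply_def]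
    split_ifs with hi hj
    · rw [hi, hX]
    · rw [hj, hX]
    · rfl
  exact Ideal.mem_span_singleton.mp (Ideal.Quotient.eq.mp (DFunLike.congr_fun hπ f).symm)

theorem X_sub_X_dvd_X_mul_pderiv_sub {g : MvPolynomial σ R} (hg : g.IsSymmetric) (i j : σ) :
    X i - X j ∣ X i * pderiv i g - X j * pderiv j g := by
  classical
  have hswap : rename (Equiv.swap i j) (X i * pderiv i g) = X j * pderiv j g := by
    rw [map_mul, rename_X, ← pderiv_rename (Equiv.swap i j).injective, hg, Equiv.swap_apply_left]
  exact hswap ▸ X_sub_X_dvd_sub_rename_swap i j (X i * pderiv i g)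

end Swap

section Operators

variable (σ R : Type*) [Fintype σ] [CommRing R]

/-- The lowering operator `J⁻ = ∑ᵢ ∂ᵢ`. -/
def lowering : MvPolynomial σ R →ₗ[R] MvPolynomial σ R :=
  ∑ i, (pderiv i).toLinearMap

/-- The Euler operator `J⁰ = ∑ᵢ zᵢ∂ᵢ`. -/
def euler : MvPolynomial σ R →ₗ[R] MvPolynomial σ R :=
  ∑ i, LinearMap.mulLeft R (X i) ∘ₗ (pderiv i).toLinearMap

/-- The interaction-free part `∑ᵢ zᵢ∂ᵢ²` of `T₁`. -/
def freeT₁ : MvPolynomial σ R →ₗ[R] MvPolynomial σ R :=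
  ∑ i, LinearMap.mulLeft R (X i) ∘ₗ (pderiv i).toLinearMap ∘ₗ (pderiv i).toLinearMap

variable {σ R}

theorem lowering_apply (f : MvPolynomial σ R) : lowering σ R f = ∑ i, pderiv i f := by
  simp [lowering]

theorem euler_apply (f : MvPolynomial σ R) : euler σ R f = ∑ i, X i * pderiv i f := by
  simp [euler]

theorem freeT₁_apply (f : MvPolynomial σ R) :
    freeT₁ σ R f = ∑ i, X i * pderiv i (pderiv i f) := by
  simp [freeT₁]

theorem lowering_X_mul (i : σ) (g : MvPolynomial σ R) :
    lowering σ R (X i * g) = X i * lowering σ R g + g := by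
  classical
  simp [lowering_apply, pderiv_X, Pi.single_apply, Finset.sum_add_distrib,
    Finset.mul_sum, add_comm]

theorem euler_X_mul (i : σ) (g : MvPolynomial σ R) :
    euler σ R (X i * g) = X i * (euler σ R g + g) := by
  classical
  simp [euler_apply, pderiv_X, Pi.single_apply, Finset.sum_add_distrib, mul_add,
    Finset.mul_sum, add_comm, mul_left_comm]

theorem freeT₁_X_mul (i : σ) (g : MvPolynomial σ R) :
    freeT₁ σ R (X i * g) = X i * (freeT₁ σ R g + 2 * pderiv i g) := by
  classical
  have hterm (j : σ) : X j * pderiv j (pderiv j (X i * g)) =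
      X i * (X j * pderiv j (pderiv j g)) + if i = j then 2 * (X j * pderiv j g) else 0 := by
    rcases eq_or_ne i j with rfl | hij
    · simp only [Derivation.leibniz, smul_eq_mul, pderiv_X_self, mul_one, map_add, if_true]
      ring
    · simp only [Derivation.leibniz, smul_eq_mul, pderiv_X_of_ne hij, mul_zero, add_zero,
        if_neg hij]
      ring
  simp only [freeT₁_apply, hterm, Finset.sum_add_distrib, ← Finset.mul_sum, Finset.sum_ite_eq,
    Finset.mem_univ, if_true]
  ring

theorem totalDegree_lowering_le (f : MvPolynomial σ R) :
    (lowering σ R f).totalDegree ≤ f.totalDegree := by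
  rw [lowering_apply]
  exact totalDegree_finsetSum_le fun i _ ↦ (totalDegree_pderiv_le i f).trans (Nat.sub_le _ _)

theorem totalDegree_euler_le (f : MvPolynomial σ R) :
    (euler σ R f).totalDegree ≤ f.totalDegree := by
  rw [euler_apply]
  exact totalDegree_finsetSum_le fun i _ ↦ totalDegree_X_mul_pderiv_le i i f

theorem totalDegree_freeT₁_le (f : MvPolynomial σ R) :
    (freeT₁ σ R f).totalDegree ≤ f.totalDegree := by
  rw [freeT₁_apply]
  exact totalDegree_finsetSum_le fun i _ ↦ (totalDegree_X_mul_pderiv_le i i _).trans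
    ((totalDegree_pderiv_le i f).trans (Nat.sub_le _ _))

end Operators

section PairInteraction

variable {σ R : Type*} [CommRing R]

/-- The embedding of polynomials into rational functions as a map of `R`-algebras; `phi N` is its
underlying ring homomorphism when `σ = Fin N` and `R = ℂ`. -/
def ratEmb : MvPolynomial σ R →ₐ[R] FractionRing (MvPolynomial σ R) :=
  IsScalarTower.toAlgHom R (MvPolynomial σ R) (FractionRing (MvPolynomial σ R))

theorem ratEmb_injective : Function.Injective (ratEmb (σ := σ) (R := R)) :=
  IsFractionRing.injective (MvPolynomial σ R) (FractionRing (MvPolynomial σ R))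

variable [IsDomain R] [DecidableEq σ]

/-- The contribution
`2 (zᵢ - zⱼ)⁻¹ (zᵢ∂ᵢ - zⱼ∂ⱼ) - (zᵢ + zⱼ) (zᵢ - zⱼ)⁻² (1 - Kᵢⱼ)`
of the pair `i, j` to the coefficient of `a` in `T₁`. -/
def pairInteraction (i j : σ) : MvPolynomial σ R →ₗ[R] FractionRing (MvPolynomial σ R) :=
  2 • LinearMap.mulLeft R (ratEmb (X i - X j))⁻¹ ∘ₗ ratEmb.toLinearMap ∘ₗ
      (LinearMap.mulLeft R (X i) ∘ₗ (pderiv i).toLinearMap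
        - LinearMap.mulLeft R (X j) ∘ₗ (pderiv j).toLinearMap)
    - LinearMap.mulLeft R (ratEmb (X i + X j) * (ratEmb (X i - X j))⁻¹ ^ 2) ∘ₗ
      ratEmb.toLinearMap ∘ₗ (LinearMap.id - (rename (Equiv.swap i j)).toLinearMap)

theorem pairInteraction_apply (i j : σ) (f : MvPolynomial σ R) :
    pairInteraction i j f =
      2 * ((ratEmb (X i - X j))⁻¹ * ratEmb (X i * pderiv i f - X j * pderiv j f))
        - ratEmb (X i + X j) * (ratEmb (X i - X j))⁻¹ ^ 2 *
          ratEmb (f - rename (Equiv.swap i j) f) := by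
  simp [pairInteraction, two_mul, mul_assoc]

variable {i j : σ} {g : MvPolynomial σ R}

theorem pairInteraction_of_isSymmetric (hg : g.IsSymmetric) :
    pairInteraction i j g =
      2 * ((ratEmb (X i - X j))⁻¹ * ratEmb (X i * pderiv i g - X j * pderiv j g)) := by
  rw [pairInteraction_apply, hg, sub_self, map_zero, mul_zero, sub_zero]

theorem pairInteraction_eq_ratEmb (hij : i ≠ j) (hg : g.IsSymmetric) {h : MvPolynomial σ R}
    (hh : X i * pderiv i g - X j * pderiv j g = (X i - X j) * h) :
    pairInteraction i j g = ratEmb (2 * h) := by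
  have hne : ratEmb (X i - X j : MvPolynomial σ R) ≠ 0 :=
    (map_ne_zero_iff _ ratEmb_injective).mpr (X_sub_X_ne_zero hij)
  rw [pairInteraction_of_isSymmetric hg, hh, map_mul ratEmb (X i - X j), inv_mul_cancel_left₀ hne,
    map_mul, map_ofNat]

theorem exists_pairInteraction_eq (hij : i ≠ j) (hg : g.IsSymmetric) :
    ∃ h : MvPolynomial σ R, h.totalDegree ≤ g.totalDegree ∧ pairInteraction i j g = ratEmb h := by
  obtain ⟨h, hh⟩ := X_sub_X_dvd_X_mul_pderiv_sub hg i j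
  refine ⟨2 * h, ?_, pairInteraction_eq_ratEmb hij hg hh⟩
  rcases eq_or_ne h 0 with rfl | hne
  · simp
  have hdeg : (2 * h).totalDegree ≤ h.totalDegree := by
    rw [two_mul]
    exact (totalDegree_add _ _).trans (max_self _).le
  calc (2 * h).totalDegree ≤ h.totalDegree := hdeg
    _ ≤ ((X i - X j) * h).totalDegree :=
      totalDegree_le_of_dvd_of_isDomain (dvd_mul_left _ _) (mul_ne_zero (X_sub_X_ne_zero hij) hne)
    _ = (X i * pderiv i g - X j * pderiv j g).totalDegree := by rw [hh]
    _ ≤ g.totalDegree := (totalDegree_sub _ _).trans <|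
      max_le (totalDegree_X_mul_pderiv_le i i g) (totalDegree_X_mul_pderiv_le j j g)

/-- `1 - Kᵢⱼ` contributes `(zᵢ + zⱼ)g / (zᵢ - zⱼ)` when `k = i`; the Leibniz rule contributes
`2zᵢg / (zᵢ - zⱼ)`, and the difference is `g`. -/
theorem pairInteraction_X_mul (hij : i ≠ j) (hg : g.IsSymmetric) (k : σ) :
    pairInteraction i j (X k * g) = ratEmb (X k) * pairInteraction i j g
      + ratEmb ((if i = k then g else 0) + if j = k then g else 0) := by
  have hne : ratEmb (X i - X j : MvPolynomial σ R) ≠ 0 :=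
    (map_ne_zero_iff _ ratEmb_injective).mpr (X_sub_X_ne_zero hij)
  rw [pairInteraction_of_isSymmetric hg, pairInteraction_apply]
  simp only [map_mul (rename _), hg _, rename_X, pderiv_mul, pderiv_X, Pi.single_apply]
  rw [map_sub] at hne
  rcases eq_or_ne i k with rfl | hik
  · simp only [map_sub, map_mul, map_add, Equiv.swap_apply_left, if_true, if_neg hij,
      if_neg hij.symm, one_mul, zero_mul, zero_add, add_zero]
    field_simp
    ring
  rcases eq_or_ne j k with rfl | hjk
  · simp only [map_sub, map_mul, map_add, Equiv.swap_apply_right, if_true, if_neg hij,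
      if_neg hij.symm, one_mul, zero_mul, zero_add]
    field_simp
    ring
  · simp only [map_sub, map_mul, Equiv.swap_apply_of_ne_of_ne hik.symm hjk.symm, if_neg hik,
      if_neg hjk, if_neg hik.symm, if_neg hjk.symm, zero_mul, zero_add, sub_self, map_zero,
      mul_zero, sub_zero, add_zero]
    ring

end PairInteraction

section GaugeHamiltonian

variable {σ R : Type*} [Fintype σ] [DecidableEq σ] [CommRing R] [IsDomain R]

/-- The operator `-4T₁ - βJ⁻ + γJ⁰ + δ`, where the cyclic successor `i + 1` in
`T₁ = freeT₁ + α ∑ᵢ pairInteraction i (τ i)` is replaced by an arbitrary permutation `τ` of the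
variables. -/
def gaugeHamiltonian (τ : Equiv.Perm σ) (α β γ δ : R) :
    MvPolynomial σ R →ₗ[R] FractionRing (MvPolynomial σ R) :=
  -(4 : R) • (ratEmb.toLinearMap ∘ₗ freeT₁ σ R + α • ∑ i, pairInteraction i (τ i))
    + ratEmb.toLinearMap ∘ₗ (-β • lowering σ R + γ • euler σ R + δ • LinearMap.id)

theorem gaugeHamiltonian_apply (τ : Equiv.Perm σ) (α β γ δ : R) (f : MvPolynomial σ R) :
    gaugeHamiltonian τ α β γ δ f =
      -(4 : R) • (ratEmb (freeT₁ σ R f) + α • ∑ i, pairInteraction i (τ i) f)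
        + ratEmb (-β • lowering σ R f + γ • euler σ R f + δ • f) := by
  simp [gaugeHamiltonian]

variable {τ : Equiv.Perm σ} (hτ : ∀ i, τ i ≠ i) (α β γ δ : R) {g : MvPolynomial σ R}
include hτ

theorem exists_gaugeHamiltonian_eq (hg : g.IsSymmetric) :
    ∃ h : MvPolynomial σ R,
      h.totalDegree ≤ g.totalDegree ∧ gaugeHamiltonian τ α β γ δ g = ratEmb h := by
  choose h hdeg hh using fun i ↦ exists_pairInteraction_eq (hτ i).symm hg
  refine ⟨-(4 : R) • (freeT₁ σ R g + α • ∑ i, h i)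
    + (-β • lowering σ R g + γ • euler σ R g + δ • g), ?_, ?_⟩
  · have hfree := totalDegree_freeT₁_le g
    have hlow := totalDegree_lowering_le g
    have heuler := totalDegree_euler_le g
    simp only [← mem_restrictTotalDegree] at hdeg hfree hlow heuler ⊢
    have hself : g ∈ restrictTotalDegree σ R g.totalDegree :=
      (mem_restrictTotalDegree σ _ g).mpr le_rfl
    exact add_mem
      (Submodule.smul_mem _ _ (add_mem hfree (Submodule.smul_mem _ _ (sum_mem fun i _ ↦ hdeg i))))
      (add_mem (add_mem (Submodule.smul_mem _ _ hlow) (Submodule.smul_mem _ _ heuler))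
        (Submodule.smul_mem _ _ hself))
  · simp only [gaugeHamiltonian_apply, hh, map_add, map_smul, map_sum]

theorem totalDegree_le_of_gaugeHamiltonian_eq (hg : g.IsSymmetric) {h : MvPolynomial σ R}
    (hh : gaugeHamiltonian τ α β γ δ g = ratEmb h) : h.totalDegree ≤ g.totalDegree := by
  obtain ⟨h', hdeg, hh'⟩ := exists_gaugeHamiltonian_eq hτ α β γ δ hg
  rwa [ratEmb_injective (hh.symm.trans hh')]

theorem sum_pairInteraction_X_mul (hg : g.IsSymmetric) (k : σ) :
    ∑ i, pairInteraction i (τ i) (X k * g) =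
      ratEmb (X k) * ∑ i, pairInteraction i (τ i) g + ratEmb (2 * g) := by
  have hsum : ∑ i, (if τ i = k then g else 0) = g := by
    rw [Equiv.sum_comp τ fun i ↦ if i = k then g else 0]
    simp
  simp only [pairInteraction_X_mul (hτ _).symm hg, Finset.sum_add_distrib, ← Finset.mul_sum,
    ← map_sum, hsum]
  simp [two_mul]

theorem gaugeHamiltonian_X_mul (hg : g.IsSymmetric) (k : σ) :
    gaugeHamiltonian τ α β γ δ (X k * g) =
      ratEmb (X k) * (gaugeHamiltonian τ α β γ δ g + ratEmb (γ • g - (8 : R) • pderiv k g))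
        - ratEmb ((8 * α + β) • g) := by
  simp only [gaugeHamiltonian_apply, sum_pairInteraction_X_mul hτ hg, freeT₁_X_mul, lowering_X_mul,
    euler_X_mul, map_add, map_sub, map_mul, map_smul, map_ofNat]
  simp only [Algebra.smul_def, map_add, map_mul, map_neg, map_ofNat]
  ring

end GaugeHamiltonian

section PowerSums

variable {σ R : Type*} [Fintype σ] [CommRing R]

theorem pderiv_psum_one (i : σ) : pderiv i (psum σ R 1) = 1 := by
  classical
  simp [psum_one, pderiv_X, Pi.single_apply]

theorem pderiv_psum_two (i : σ) : pderiv i (psum σ R 2) = 2 * X i := by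
  classical
  simp [psum, pderiv_X, Pi.single_apply]

theorem pderiv_aeval_psum_one (i : σ) (p : Polynomial R) :
    pderiv i (Polynomial.aeval (psum σ R 1) p) =
      Polynomial.aeval (psum σ R 1) (Polynomial.derivative p) := by
  rw [Derivation.map_aeval, pderiv_psum_one, smul_eq_mul, mul_one]

theorem isSymmetric_aeval_psum_one (p : Polynomial R) :
    (Polynomial.aeval (psum σ R 1) p).IsSymmetric := fun e ↦ by
  rw [← Polynomial.aeval_algHom_apply, rename_psum]

variable (σ) in
/-- The polynomial `p(σ₁) + q(σ₁)σ₂`, as a linear function of the pair `(p, q)`. -/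
def psumAffine : Polynomial R × Polynomial R →ₗ[R] MvPolynomial σ R :=
  (Polynomial.aeval (psum σ R 1)).toLinearMap.coprod
    (LinearMap.mulRight R (psum σ R 2) ∘ₗ (Polynomial.aeval (psum σ R 1)).toLinearMap)

variable (p q : Polynomial R)

theorem psumAffine_apply :
    psumAffine σ (p, q) =
      Polynomial.aeval (psum σ R 1) p + Polynomial.aeval (psum σ R 1) q * psum σ R 2 := rfl

theorem psumAffine_zero_right :
    psumAffine σ (p, 0) = Polynomial.aeval (psum σ R 1) p := by
  rw [psumAffine_apply, map_zero, zero_mul, add_zero]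

theorem isSymmetric_psumAffine : (psumAffine σ (p, q)).IsSymmetric :=
  (isSymmetric_aeval_psum_one p).add ((isSymmetric_aeval_psum_one q).mul (psum_isSymmetric σ R 2))

theorem pderiv_psumAffine (i : σ) :
    pderiv i (psumAffine σ (p, q)) =
      psumAffine σ (Polynomial.derivative p, Polynomial.derivative q)
        + 2 * Polynomial.aeval (psum σ R 1) q * X i := by
  simp only [psumAffine_apply, map_add, pderiv_mul, pderiv_aeval_psum_one, pderiv_psum_two]
  ring

theorem lowering_psumAffine :
    lowering σ R (psumAffine σ (p, q)) =
      psumAffine σ (Fintype.card σ • Polynomial.derivative p + 2 * (Polynomial.X * q),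
        Fintype.card σ • Polynomial.derivative q) := by
  simp only [lowering_apply, pderiv_psumAffine, Finset.sum_add_distrib, ← Finset.mul_sum,
    ← psum_one, Finset.sum_const, Finset.card_univ]
  simp only [psumAffine_apply, map_add, map_mul, map_nsmul, map_ofNat, Polynomial.aeval_X]
  simp only [nsmul_eq_mul]
  ring

theorem sum_X_mul_X : ∑ i, X i * X i = psum σ R 2 := by
  simp only [psum, sq]

theorem euler_psumAffine :
    euler σ R (psumAffine σ (p, q)) =
      psumAffine σ (Polynomial.X * Polynomial.derivative p,
        Polynomial.X * Polynomial.derivative q + 2 * q) := by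
  simp only [euler_apply, pderiv_psumAffine, mul_add, mul_left_comm (X _), Finset.sum_add_distrib,
    ← Finset.mul_sum, ← Finset.sum_mul, ← psum_one, sum_X_mul_X]
  simp only [psumAffine_apply, map_add, map_mul, map_ofNat, Polynomial.aeval_X]
  ring

theorem freeT₁_psumAffine :
    freeT₁ σ R (psumAffine σ (p, q)) =
      psumAffine σ
        (Polynomial.X * Polynomial.derivative (Polynomial.derivative p) + 2 * (Polynomial.X * q),
          Polynomial.X * Polynomial.derivative (Polynomial.derivative q)
            + 4 * Polynomial.derivative q) := by
  have hterm (i : σ) : X i * pderiv i (pderiv i (psumAffine σ (p, q))) =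
      psumAffine σ (Polynomial.derivative (Polynomial.derivative p),
          Polynomial.derivative (Polynomial.derivative q)) * X i
        + 4 * Polynomial.aeval (psum σ R 1) (Polynomial.derivative q) * (X i * X i)
        + 2 * Polynomial.aeval (psum σ R 1) q * X i := by
    have htwo : pderiv i (2 : MvPolynomial σ R) = 0 := (pderiv i).map_natCast 2
    simp only [pderiv_psumAffine, map_add, pderiv_mul, pderiv_aeval_psum_one, pderiv_X_self, htwo]
    ring
  simp only [freeT₁_apply, hterm, Finset.sum_add_distrib, ← Finset.mul_sum, ← psum_one,
    sum_X_mul_X]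
  simp only [psumAffine_apply, map_add, map_mul, map_ofNat, Polynomial.aeval_X]
  ring

theorem euler_aeval_psum_one :
    euler σ R (Polynomial.aeval (psum σ R 1) p) =
      Polynomial.aeval (psum σ R 1) (Polynomial.X * Polynomial.derivative p) := by
  simpa only [psumAffine_zero_right, map_zero, mul_zero, add_zero] using euler_psumAffine p 0

theorem freeT₁_aeval_psum_one :
    freeT₁ σ R (Polynomial.aeval (psum σ R 1) p) =
      Polynomial.aeval (psum σ R 1)
        (Polynomial.X * Polynomial.derivative (Polynomial.derivative p)) := by
  simpa only [psumAffine_zero_right, map_zero, mul_zero, add_zero] using freeT₁_psumAffine p 0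

/-- The operator induced by `gaugeHamiltonian` on polynomials in `σ₁`, for `m` variables. -/
def radialHamiltonian (m : ℕ) (α β γ δ : R) (p : Polynomial R) : Polynomial R :=
  -(4 : R) • (Polynomial.X * Polynomial.derivative (Polynomial.derivative p)
      + (2 * α) • (m • Polynomial.derivative p))
    - β • (m • Polynomial.derivative p) + γ • (Polynomial.X * Polynomial.derivative p) + δ • p

/-- The operator induced by `gaugeHamiltonian` on the factor `p` of `zₖ p(σ₁)`, up to a multiple of
`p(σ₁)`. -/
def shiftedRadialHamiltonian (m : ℕ) (α β γ δ : R) (p : Polynomial R) : Polynomial R :=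
  radialHamiltonian m α β γ δ p + γ • p - (8 : R) • Polynomial.derivative p

theorem totalDegree_aeval_shiftedRadialHamiltonian_le [Nonempty σ] (m : ℕ) (α β γ δ : R) :
    (Polynomial.aeval (psum σ R 1) (shiftedRadialHamiltonian m α β γ δ p)).totalDegree ≤
      (Polynomial.aeval (psum σ R 1) p).totalDegree := by
  set f := Polynomial.aeval (psum σ R 1) p
  have hself := le_refl f.totalDegree
  have hder := (totalDegree_pderiv_le (Classical.arbitrary σ) f).trans (Nat.sub_le _ _)
  have heuler := totalDegree_euler_le f
  have hfree := totalDegree_freeT₁_le f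
  rw [pderiv_aeval_psum_one] at hder
  rw [euler_aeval_psum_one] at heuler
  rw [freeT₁_aeval_psum_one] at hfree
  simp only [← mem_restrictTotalDegree] at hself hder heuler hfree ⊢
  have hnsmul := Submodule.smul_of_tower_mem _ m hder
  rw [← map_nsmul] at hnsmul
  simp only [shiftedRadialHamiltonian, radialHamiltonian, map_add, map_sub, map_smul]
  exact sub_mem (add_mem (add_mem (add_mem (sub_mem
    (Submodule.smul_mem _ _ (add_mem hfree (Submodule.smul_mem _ _ hnsmul)))
    (Submodule.smul_mem _ _ hnsmul)) (Submodule.smul_mem _ _ heuler))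
    (Submodule.smul_mem _ _ hself)) (Submodule.smul_mem _ _ hself)) (Submodule.smul_mem _ _ hder)

variable [DecidableEq σ] [IsDomain R]

theorem pairInteraction_psumAffine {i j : σ} (hij : i ≠ j) :
    pairInteraction i j (psumAffine σ (p, q)) =
      ratEmb (2 * (psumAffine σ (Polynomial.derivative p, Polynomial.derivative q)
        + 2 * Polynomial.aeval (psum σ R 1) q * (X i + X j))) := by
  refine pairInteraction_eq_ratEmb hij (isSymmetric_psumAffine p q) ?_
  rw [pderiv_psumAffine, pderiv_psumAffine]
  ring

variable {τ : Equiv.Perm σ} (hτ : ∀ i, τ i ≠ i)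
include hτ

theorem sum_pairInteraction_psumAffine :
    ∑ i, pairInteraction i (τ i) (psumAffine σ (p, q)) =
      ratEmb (psumAffine σ
        (2 * (Fintype.card σ • Polynomial.derivative p) + 8 * (Polynomial.X * q),
          2 * (Fintype.card σ • Polynomial.derivative q))) := by
  have hsum : ∑ i, X (τ i) = psum σ R 1 := by
    rw [Equiv.sum_comp τ X, psum_one]
  simp only [pairInteraction_psumAffine p q (hτ _).symm, ← map_sum, ← Finset.mul_sum,
    Finset.sum_add_distrib, hsum, ← psum_one, Finset.sum_const, Finset.card_univ]
  refine congrArg ratEmb ?_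
  simp only [psumAffine_apply, map_add, map_mul, map_nsmul, map_ofNat, Polynomial.aeval_X]
  simp only [nsmul_eq_mul]
  ring

variable (α β γ δ : R)

theorem gaugeHamiltonian_psumAffine :
    gaugeHamiltonian τ α β γ δ (psumAffine σ (p, q)) =
      ratEmb (psumAffine σ
        (radialHamiltonian (Fintype.card σ) α β γ δ p - (8 + 32 * α + 2 * β) • (Polynomial.X * q),
          radialHamiltonian (Fintype.card σ) α β γ δ q - (16 : R) • Polynomial.derivative q
            + (2 * γ) • q)) := by
  rw [gaugeHamiltonian_apply, freeT₁_psumAffine, lowering_psumAffine, euler_psumAffine,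
    sum_pairInteraction_psumAffine p q hτ]
  simp only [← map_smul ratEmb, ← map_smul (psumAffine σ), ← map_add ratEmb,
    ← map_add (psumAffine σ)]
  congr 2
  simp only [radialHamiltonian, Prod.smul_mk, Prod.mk_add_mk, Prod.mk.injEq,
    Polynomial.smul_eq_C_mul, map_add, map_mul, map_neg, map_ofNat]
  constructor <;> ring

theorem gaugeHamiltonian_aeval_psum_one :
    gaugeHamiltonian τ α β γ δ (Polynomial.aeval (psum σ R 1) p) =
      ratEmb (Polynomial.aeval (psum σ R 1) (radialHamiltonian (Fintype.card σ) α β γ δ p)) := by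
  have h := gaugeHamiltonian_psumAffine p 0 hτ α β γ δ
  simpa [radialHamiltonian, psumAffine_zero_right] using h

theorem gaugeHamiltonian_X_mul_aeval_psum_one (k : σ) :
    gaugeHamiltonian τ α β γ δ (X k * Polynomial.aeval (psum σ R 1) p) =
      ratEmb (X k * Polynomial.aeval (psum σ R 1)
          (shiftedRadialHamiltonian (Fintype.card σ) α β γ δ p)
        - (8 * α + β) • Polynomial.aeval (psum σ R 1) p) := by
  rw [gaugeHamiltonian_X_mul hτ α β γ δ (isSymmetric_aeval_psum_one p) k,
    gaugeHamiltonian_aeval_psum_one p hτ, pderiv_aeval_psum_one]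
  simp only [shiftedRadialHamiltonian, map_add, map_sub, map_mul, map_smul]
  ring

end PowerSums

section Bivariate

theorem degreeOf_aeval_X_of_ne {σ R : Type*} [CommSemiring R] {i j : σ} (hij : i ≠ j)
    (p : Polynomial R) : (Polynomial.aeval (X j : MvPolynomial σ R) p).degreeOf i = 0 := by
  rw [Polynomial.aeval_eq_sum_range, ← Nat.le_zero]
  refine (degreeOf_sum_le i _ _).trans (Finset.sup_le fun k _ ↦ ?_)
  rw [smul_eq_C_mul]
  exact (degreeOf_C_mul_le _ i _).trans (degreeOf_X_pow_of_ne k hij).le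

variable {σ R : Type*} [Fintype σ] [CommRing R]

theorem aeval_psum_mem_range_psumAffine {F : MvPolynomial (Fin 2) R} (hF : F.degreeOf 1 ≤ 1) :
    aeval ![psum σ R 1, psum σ R 2] F ∈ LinearMap.range (psumAffine (R := R) σ) := by
  rw [F.as_sum, map_sum]
  refine sum_mem fun m hm ↦ ?_
  have hm1 : m 1 ≤ 1 := degreeOf_le_iff.mp hF m hm
  rw [aeval_monomial, Finsupp.prod_fintype _ _ fun _ ↦ pow_zero _, Fin.prod_univ_two]
  interval_cases m 1
  · exact ⟨(Polynomial.monomial (m 0) (coeff m F), 0), by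
      simp [psumAffine_apply, Polynomial.aeval_monomial]⟩
  · exact ⟨(0, Polynomial.monomial (m 0) (coeff m F)), by
      simp [psumAffine_apply, Polynomial.aeval_monomial, mul_assoc]⟩

theorem exists_aeval_psum_eq_psumAffine (p q : Polynomial R) :
    ∃ F : MvPolynomial (Fin 2) R, F.degreeOf 1 ≤ 1 ∧
      aeval ![psum σ R 1, psum σ R 2] F = psumAffine σ (p, q) := by
  refine ⟨Polynomial.aeval (X 0) p + Polynomial.aeval (X 0) q * X 1, ?_, ?_⟩
  · rcases subsingleton_or_nontrivial R with _ | _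
    · rw [Subsingleton.elim (_ + _) 0, degreeOf_zero]
      exact Nat.zero_le 1
    have hadd := degreeOf_add_le 1 (Polynomial.aeval (X 0 : MvPolynomial (Fin 2) R) p)
      (Polynomial.aeval (X 0) q * X 1)
    have hmul := degreeOf_mul_le 1 (Polynomial.aeval (X 0 : MvPolynomial (Fin 2) R) q) (X 1)
    rw [degreeOf_aeval_X_of_ne one_ne_zero] at hadd hmul
    rw [degreeOf_X_self] at hmul
    omega
  · rw [map_add, map_mul, ← Polynomial.aeval_algHom_apply, ← Polynomial.aeval_algHom_apply,
      aeval_X, aeval_X]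
    rfl

end Bivariate

section SpinSpace

variable {N d n : ℕ} [NeZero N]

theorem C_Lam_mul_psumAffine_mem_H1space (s : SpinV N d) {p q : Polynomial ℂ}
    (hdeg : (psumAffine (Fin N) (p, q)).totalDegree ≤ n) :
    (fun c ↦ C (Lam s c) * psumAffine (Fin N) (p, q)) ∈ H1space N d n := by
  obtain ⟨F, hF, hFpq⟩ := exists_aeval_psum_eq_psumAffine (σ := Fin N) p q
  rw [← hFpq] at hdeg ⊢
  exact Submodule.subset_span (Or.inl ⟨s, F, hF, hdeg, rfl⟩)

variable {τ : Equiv.Perm (Fin N)} (hτ : ∀ i, τ i ≠ i) (α β γ δ : ℂ) {Φ : SpinPoly N d}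
include hτ

theorem exists_gaugeHamiltonian_eq_of_mem_H1genF (hΦ : Φ ∈ H1genF N d n) :
    ∃ Φ' ∈ H1space N d n, ∀ c, ratEmb (Φ' c) = gaugeHamiltonian τ α β γ δ (Φ c) := by
  obtain ⟨s, F, hF, hdeg, rfl⟩ := hΦ
  obtain ⟨⟨p, q⟩, hpq : _ = aeval ![sig N 1, sig N 2] F⟩ :=
    aeval_psum_mem_range_psumAffine (σ := Fin N) hF
  rw [← hpq] at hdeg ⊢
  have haction := gaugeHamiltonian_psumAffine p q hτ α β γ δ
  refine ⟨_, C_Lam_mul_psumAffine_mem_H1space s ((totalDegree_le_of_gaugeHamiltonian_eq hτ α β γ δ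
    (isSymmetric_psumAffine p q) haction).trans hdeg), fun c ↦ ?_⟩
  simp only [C_mul', map_smul, haction]

theorem exists_gaugeHamiltonian_eq_of_mem_H1genG (hΦ : Φ ∈ H1genG N d n) :
    ∃ Φ' ∈ H1space N d n, ∀ c, ratEmb (Φ' c) = gaugeHamiltonian τ α β γ δ (Φ c) := by
  obtain ⟨s, G, hdeg, rfl⟩ := hΦ
  have hdeg' := totalDegree_aeval_shiftedRadialHamiltonian_le (σ := Fin N) G
    (Fintype.card (Fin N)) α β γ δ
  refine ⟨_, sub_mem
    (Submodule.subset_span (Or.inr ⟨s, _, (Nat.add_le_add_right hdeg' 1).trans hdeg, rfl⟩))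
    (Submodule.smul_mem _ (8 * α + β) (C_Lam_mul_psumAffine_mem_H1space (p := G) (q := 0) s ?_)),
    fun c ↦ ?_⟩
  · rw [psumAffine_zero_right]
    exact (Nat.le_succ _).trans hdeg
  · have haction (i : Fin N) :
        gaugeHamiltonian τ α β γ δ (X i * Polynomial.aeval (sig N 1) G) = _ :=
      gaugeHamiltonian_X_mul_aeval_psum_one G hτ α β γ δ i
    simp only [Pi.sub_apply, Pi.smul_apply, psumAffine_zero_right, Lam, Finset.sum_apply, map_sum,
      Finset.sum_mul, C_mul', map_sub, map_smul, haction, smul_sub, Finset.sum_sub_distrib,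
      smul_comm _ (8 * α + β), ← Finset.smul_sum]
    rfl

end SpinSpace

theorem stmt_8_general (N d : ℕ) [NeZero N] (τ : Equiv.Perm (Fin N)) (hτ : ∀ i, τ i ≠ i)
    (α β γ δ : ℂ) (n : ℕ) (Φ : SpinPoly N d) (hΦ : Φ ∈ H1space N d n) :
    ∃ Φ' ∈ H1space N d n, ∀ c, phi N (Φ' c) = gaugeHamiltonian τ α β γ δ (Φ c) := by
  have hspan : H1space N d n ≤ ((H1space N d n).map (ratEmb.toLinearMap.compLeft _)).comap
      ((gaugeHamiltonian τ α β γ δ).compLeft _) := by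
    refine Submodule.span_le.mpr fun Ψ hΨ ↦ ?_
    obtain ⟨Ψ', hmem, hΨ'⟩ := hΨ.elim (exists_gaugeHamiltonian_eq_of_mem_H1genF hτ α β γ δ)
      (exists_gaugeHamiltonian_eq_of_mem_H1genG hτ α β γ δ)
    exact ⟨Ψ', hmem, funext hΨ'⟩
  obtain ⟨Φ', hmem, hΦ'⟩ := hspan hΦ
  exact ⟨Φ', hmem, congrFun hΦ'⟩

theorem Hbar1op_eq_gaugeHamiltonian (N : ℕ) [NeZero N] (a b ω : ℝ) (f : MvP N) :
    Hbar1op N a b ω f = gaugeHamiltonian (Equiv.addRight 1) (a : ℂ) ((2 * (2 * b + 1) : ℝ) : ℂ)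
      ((4 * ω : ℝ) : ℂ) ((N * ω * (4 * a + 2 * b + 1) : ℝ) : ℂ) f := by
  have hsmul (z : ℂ) (x : FractionRing (MvP N)) : z • x = phi N (C z) * x := Algebra.smul_def z x
  have hphi (g : MvP N) : ratEmb g = phi N g := rfl
  rw [gaugeHamiltonian_apply, freeT₁_apply, lowering_apply, euler_apply]
  simp only [map_add, map_smul, map_sum, hsmul]
  simp only [Hbar1op, T1op, pairInteraction_apply, Equiv.coe_addRight, hphi,
    Finset.sum_sub_distrib, ← Finset.mul_sum, Complex.ofReal_mul, Complex.ofReal_ofNat,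
    map_neg, map_mul, map_ofNat]
  ring

theorem addRight_one_ne_self {N : ℕ} [NeZero N] (hN : N ≠ 1) (i : Fin N) :
    Equiv.addRight 1 i ≠ i := by
  simpa

theorem stmt_8 (N d : ℕ) [NeZero N] (hN : 3 ≤ N) (hd : 1 ≤ d) (a b ω : ℝ) (n : ℕ)
    (Φ : SpinPoly N d) (hΦ : Φ ∈ H1space N d n) :
    ∃ Φ' ∈ H1space N d n, ∀ c : Fin N → Fin d, phi N (Φ' c) = Hbar1op N a b ω (Φ c) := by
  simp only [Hbar1op_eq_gaugeHamiltonian]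
  exact stmt_8_general N d _ (addRight_one_ne_self (by omega)) _ _ _ _ n Φ hΦ
end
end
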